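/- Let A be a left self-injective semiprimary ring, e an idempotent of A with Ae indecomposable as a left A-module, and M a left A-module with simple essential socle that embeds in Ae. Then the right A-module M* = Hom_A(M, A) is a quotient of eA = Hom_A(Ae, A); in particular M* is a local right A-module. -/

import Mathlib

universe u v

open Cardinal

/-- A ring is *semiprimary* if its Jacobson radical `J` is nilpotent
(`J ^ n = 0`, expressed elementwise: every product of `n` elements of `J` vanishes)
and the quotient ring `A / J` is a semisimple ring. -/
def IsSemiprimary (A : Type*) [Ring A] : Prop :=
  IsSemisimpleRing (RingCon.Quotient (⊥ : TwoSidedIdeal A).jacobson.ringCon) ∧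
  ∃ n : ℕ, 0 < n ∧ ∀ f : Fin n → A,
    (∀ i, f i ∈ Ideal.jacobson (⊥ : Ideal A)) → (List.ofFn f).prod = 0

/-- A ring is *quasi-Frobenius* if it is left self-injective and left artinian. -/
def IsQuasiFrobenius (A : Type*) [Ring A] : Prop :=
  Module.Injective A A ∧ IsArtinianRing A

/-- The socle of a module: the sum of all its simple submodules. -/
def socle (R M : Type*) [Ring R] [AddCommGroup M] [Module R M] : Submodule R M :=
  sSup {N : Submodule R M | IsSimpleModule R N}

/-- A module is *indecomposable* if it is nonzero and is not the direct sum of two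
nonzero submodules. -/
def IsIndecomposableModule (R M : Type*) [Ring R] [AddCommGroup M] [Module R M] : Prop :=
  Nontrivial M ∧ ∀ N N' : Submodule R M, IsCompl N N' → N = ⊥ ∨ N' = ⊥

/-- A submodule is *essential* if it intersects every nonzero submodule nontrivially. -/
def IsEssentialSubmodule {R M : Type*} [Ring R] [AddCommGroup M] [Module R M]
    (N : Submodule R M) : Prop :=
  ∀ P : Submodule R M, N ⊓ P = ⊥ → P = ⊥

/-!
Self-injectivity says that restriction along an embedding of `M` is surjective on duals. For
locality, note that `M` is uniform, since two nonzero submodules both contain its simple essential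
socle. A sum of two non-injective homomorphisms `M → A` kills the intersection of their kernels,
which is nonzero, so the non-injective homomorphisms form a right submodule of `M*`; it is proper
because `M` embeds in `A`. An injective homomorphism `h : M → A` generates `M*`: by self-injectivity
every `k : M → A` factors as `k = l ∘ h` with `l : A → A`, and `l` is right multiplication by `l 1`.
So every proper submodule of `M*` consists of non-injective homomorphisms.
-/

/-- A module is *uniform* if it is nonzero and any two nonzero submodules meet nontrivially, encoded
as meet-irreducibility of the zero submodule. Its purpose here is that the non-injective
homomorphisms out of a uniform module are closed under addition. -/
def IsUniformModule (R M : Type*) [Ring R] [AddCommGroup M] [Module R M] : Prop :=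
  InfIrred (⊥ : Submodule R M)

namespace IsEssentialSubmodule

variable {R M : Type*} [Ring R] [AddCommGroup M] [Module R M] {S : Submodule R M}

theorem le_of_isAtom (hess : IsEssentialSubmodule S) (hS : IsAtom S) {P : Submodule R M}
    (hP : P ≠ ⊥) : S ≤ P :=
  (hS.not_disjoint_iff_le).mp fun hdisj => hP (hess P hdisj.eq_bot)

theorem isUniformModule (hess : IsEssentialSubmodule S) (hS : IsSimpleModule R S) :
    IsUniformModule R M := by
  have hatom : IsAtom S := isSimpleModule_iff_isAtom.mp hS
  refine ⟨fun hmax => hatom.ne_bot (hmax.eq_of_ge bot_le), fun P Q hPQ => ?_⟩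
  by_contra! hne
  have hle : S ≤ P ⊓ Q := le_inf (hess.le_of_isAtom hatom hne.1) (hess.le_of_isAtom hatom hne.2)
  exact hatom.ne_bot (le_bot_iff.mp (hle.trans hPQ.le))

end IsEssentialSubmodule

theorem lcomp_surjective_of_injective {R M X Q : Type*} (S : Type*) [Ring R] [Semiring S]
    [AddCommGroup M] [Module R M] [AddCommGroup X] [Module R X] [AddCommGroup Q] [Module R Q]
    [Module S Q] [SMulCommClass R S Q] (hQ : Module.Baer R Q)
    {f : M →ₗ[R] X} (hf : Function.Injective f) :
    Function.Surjective (LinearMap.lcomp S Q f) :=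
  hQ.extension_property f hf

theorem span_singleton_eq_top_of_injective {A M : Type*} [Ring A] [AddCommGroup M] [Module A M]
    (hA : Module.Baer A A) {h : M →ₗ[A] A} (hh : Function.Injective h) :
    Submodule.span Aᵐᵒᵖ {h} = ⊤ := by
  refine (Submodule.span_singleton_eq_top_iff _ _).mpr fun k => ?_
  obtain ⟨l, rfl⟩ := hA.extension_property h hh k
  refine ⟨MulOpposite.op (l 1), LinearMap.ext fun m => ?_⟩
  calc h m * l 1 = l (h m • 1) := (l.map_smul (h m) 1).symm
    _ = l (h m) := by rw [smul_eq_mul, mul_one]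

namespace IsUniformModule

section

variable {R M : Type*} [Ring R] [AddCommGroup M] [Module R M]

/-- The non-injective homomorphisms from a uniform module `M` to `N`, as a submodule of
`M →ₗ[R] N` over any ring of scalars acting on `N` and commuting with `R`. When `M` embeds in a
self-injective ring `N = R`, it is the largest proper submodule of the dual of `M`. -/
def nonInjectiveHoms (hM : IsUniformModule R M) (S N : Type*) [Semiring S] [AddCommGroup N]
    [Module R N] [Module S N] [SMulCommClass R S N] : Submodule S (M →ₗ[R] N) where
  carrier := {h | LinearMap.ker h ≠ ⊥}
  zero_mem' := LinearMap.ker_zero.trans_ne hM.ne_top.symm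
  add_mem' {g h} hg hh hgh := by
    have hle : LinearMap.ker g ⊓ LinearMap.ker h ≤ LinearMap.ker (g + h) :=
      fun m ⟨(hgm : g m = 0), (hhm : h m = 0)⟩ => by
        rw [LinearMap.mem_ker, LinearMap.add_apply, hgm, hhm, add_zero]
    exact (hM.2 (le_bot_iff.mp (hle.trans hgh.le))).elim hg hh
  smul_mem' c h hh hch := by
    have hle : LinearMap.ker h ≤ LinearMap.ker (c • h) := fun m (hm : h m = 0) => by
      rw [LinearMap.mem_ker, LinearMap.smul_apply, hm, smul_zero]
    exact hh (le_bot_iff.mp (hle.trans hch.le))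

theorem mem_nonInjectiveHoms (hM : IsUniformModule R M) {S N : Type*} [Semiring S]
    [AddCommGroup N] [Module R N] [Module S N] [SMulCommClass R S N] {h : M →ₗ[R] N} :
    h ∈ hM.nonInjectiveHoms S N ↔ ¬ Function.Injective h :=
  LinearMap.ker_eq_bot.not

theorem nonInjectiveHoms_ne_top (hM : IsUniformModule R M) {S N : Type*} [Semiring S]
    [AddCommGroup N] [Module R N] [Module S N] [SMulCommClass R S N] {h : M →ₗ[R] N}
    (hh : Function.Injective h) : hM.nonInjectiveHoms S N ≠ ⊤ := fun htop =>
  hM.mem_nonInjectiveHoms.mp (htop ▸ Submodule.mem_top) hh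

end

theorem le_nonInjectiveHoms {A M : Type*} [Ring A] [AddCommGroup M] [Module A M]
    (hM : IsUniformModule A M) (hA : Module.Baer A A) {P : Submodule Aᵐᵒᵖ (M →ₗ[A] A)}
    (hP : P ≠ ⊤) : P ≤ hM.nonInjectiveHoms Aᵐᵒᵖ A := fun h hhP =>
  hM.mem_nonInjectiveHoms.mpr fun hh => hP <| top_le_iff.mp <|
    calc ⊤ = Submodule.span Aᵐᵒᵖ {h} := (span_singleton_eq_top_of_injective hA hh).symm
      _ ≤ P := (Submodule.span_singleton_le_iff_mem h P).mpr hhP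

end IsUniformModule

theorem dual_quotient_of_eA_and_local_general
    {A : Type u} [Ring A] (hinj : Module.Injective A A) {L : Submodule A A}
    {M : Type v} [AddCommGroup M] [Module A M] (hM : IsUniformModule A M)
    (f : M →ₗ[A] L) (hf : Function.Injective f) :
    (∃ g : (L →ₗ[A] A) →ₗ[Aᵐᵒᵖ] (M →ₗ[A] A), Function.Surjective g) ∧
    ∃ N : Submodule Aᵐᵒᵖ (M →ₗ[A] A), N ≠ ⊤ ∧ ∀ P : Submodule Aᵐᵒᵖ (M →ₗ[A] A),
      P ≠ ⊤ → P ≤ N := by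
  have hbaer : Module.Baer A A := Module.Baer.of_injective hinj
  have hembed : Function.Injective (L.subtype ∘ₗ f) := L.injective_subtype.comp hf
  exact ⟨⟨LinearMap.lcomp Aᵐᵒᵖ A f, lcomp_surjective_of_injective Aᵐᵒᵖ hbaer hf⟩,
    hM.nonInjectiveHoms Aᵐᵒᵖ A, hM.nonInjectiveHoms_ne_top hembed,
    fun _ => hM.le_nonInjectiveHoms hbaer⟩

/-- Let `A` be a left self-injective semiprimary ring, `e` an idempotent with `Ae`
indecomposable as a left module, and `M` a left `A`-module with simple essential socle
which embeds in `Ae`.  Then the right `A`-module `M* = Hom_A(M, A)` is a quotient of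
`eA = Hom_A(Ae, A)`; in particular `M*` is a local right `A`-module. -/
theorem dual_quotient_of_eA_and_local
    (A : Type u) [Ring A] (hsp : IsSemiprimary A) (hinj : Module.Injective A A)
    (e : A) (he : IsIdempotentElem e)
    (hind : IsIndecomposableModule A (Submodule.span A {e}))
    (M : Type v) [AddCommGroup M] [Module A M]
    (hsoc : IsSimpleModule A (socle A M)) (hess : IsEssentialSubmodule (socle A M))
    (f : M →ₗ[A] (Submodule.span A ({e} : Set A))) (hf : Function.Injective f) :
    (∃ g : ((Submodule.span A ({e} : Set A)) →ₗ[A] A) →ₗ[Aᵐᵒᵖ] (M →ₗ[A] A),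
      Function.Surjective g) ∧
    ∃ N : Submodule Aᵐᵒᵖ (M →ₗ[A] A), N ≠ ⊤ ∧ ∀ P : Submodule Aᵐᵒᵖ (M →ₗ[A] A),
      P ≠ ⊤ → P ≤ N :=
  dual_quotient_of_eA_and_local_general hinj (hess.isUniformModule hsoc) f hf
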